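/- Let F be a generalised clause-set and v ∈ var(F) a variable such that min_{ε∈D_v}(#_v(F) − #_{(v,ε)}(F)) ≥ |D_v| and surp(F) ≥ |D_v|. Then for every ε ∈ D_v one has δ*(⟨v→ε⟩*F) ≤ δ(F) − 1, where ⟨v→ε⟩ denotes the partial assignment with domain {v} assigning value ε to v. -/

import Mathlib

open scoped Classical

namespace GCLS

variable {V α : Type} [DecidableEq V] [DecidableEq α]

/-- A finite "functional" set of (variable, value) pairs, with values inside the
given domains `D`; used both for clauses and for partial assignments. -/
def FinFn (D : V → Finset α) : Type :=
  { s : Finset (V × α) // (∀ p ∈ s, p.2 ∈ D p.1) ∧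
      ∀ p ∈ s, ∀ q ∈ s, p.1 = q.1 → p = q }

variable {D : V → Finset α}

instance : DecidableEq (FinFn D) :=
  fun a b => decidable_of_iff (a.1 = b.1) Subtype.ext_iff.symm

namespace FinFn

/-- The set of variables occurring. -/
def vars (s : FinFn D) : Finset V := s.1.image Prod.fst

/-- Restriction to the pairs whose variable lies in `W`. -/
def restrictVars (s : FinFn D) (W : Finset V) : FinFn D :=
  ⟨s.1.filter (fun p => p.1 ∈ W),
   fun p hp => s.2.1 p (Finset.mem_filter.mp hp).1,
   fun p hp q hq h =>
     s.2.2 p (Finset.mem_filter.mp hp).1 q (Finset.mem_filter.mp hq).1 h⟩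

/-- Removal of a set of pairs. -/
def sdiff (s : FinFn D) (t : Finset (V × α)) : FinFn D :=
  ⟨s.1 \ t,
   fun p hp => s.2.1 p (Finset.mem_sdiff.mp hp).1,
   fun p hp q hq h =>
     s.2.2 p (Finset.mem_sdiff.mp hp).1 q (Finset.mem_sdiff.mp hq).1 h⟩

end FinFn

/-- Clauses: finite sets of literals `(v,ε)` (meaning "v ≠ ε"), at most one literal
per variable, values inside the domains. -/
abbrev Clause (D : V → Finset α) := FinFn D

/-- Partial assignments: finitely many variables get values inside their domains. -/
abbrev PAssign (D : V → Finset α) := FinFn D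

/-- `φ` satisfies the literal `(v,ε)` (i.e. "v ≠ ε"): `v` is assigned a value ≠ `ε`. -/
def SatLit (φ : PAssign D) (l : V × α) : Prop :=
  ∃ ε, (l.1, ε) ∈ φ.1 ∧ ε ≠ l.2

/-- `φ` satisfies a clause iff it satisfies some literal of it. -/
def SatClause (φ : PAssign D) (C : Clause D) : Prop :=
  ∃ l ∈ C.1, SatLit φ l

/-- The clause obtained from `C` by deleting all literals falsified by `φ`. -/
def Clause.restrict (φ : PAssign D) (C : Clause D) : Clause D :=
  FinFn.sdiff C φ.1

/-- The operation `φ * F` on multi-clause-sets: remove all clauses satisfied by `φ`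
and delete all falsified literals from the remaining clauses. -/
noncomputable def applyM (φ : PAssign D) (F : Multiset (Clause D)) : Multiset (Clause D) :=
  (F.filter (fun C => ¬ SatClause φ C)).map (Clause.restrict φ)

/-- The operation `φ * F` on clause-sets (with contraction of equal clauses). -/
noncomputable def applyF (φ : PAssign D) (F : Finset (Clause D)) : Finset (Clause D) :=
  (F.filter (fun C => ¬ SatClause φ C)).image (Clause.restrict φ)

/-- Satisfiability: some partial assignment satisfies all clauses. -/
def Sat (F : Multiset (Clause D)) : Prop :=
  ∃ φ : PAssign D, applyM φ F = 0

/-- Minimal unsatisfiability of a clause-set. -/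
def MinUnsat (F : Finset (Clause D)) : Prop :=
  ¬ Sat F.val ∧ ∀ F' ⊂ F, Sat F'.val

/-- The variables of a multi-clause-set. -/
def mvars (F : Multiset (Clause D)) : Finset V := F.toFinset.sup FinFn.vars

/-- The deficiency `δ(F) = c(F) - Σ_{v ∈ var(F)} (|D_v| - 1)`. -/
def delta (F : Multiset (Clause D)) : ℤ :=
  (Multiset.card F : ℤ) - ∑ v ∈ mvars F, ((D v).card - 1 : ℤ)

lemma powerset_toFinset_nonempty (F : Multiset (Clause D)) :
    F.powerset.toFinset.Nonempty :=
  ⟨0, by simp⟩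

/-- The maximal deficiency `δ*(F) = max {δ(F') : F' ≤ F}`. -/
noncomputable def deltaStar (F : Multiset (Clause D)) : ℤ :=
  F.powerset.toFinset.sup' (powerset_toFinset_nonempty F) delta

/-- A tight sub-multi-clause-set: `F' ≤ F` with `δ(F') = δ*(F)`. -/
noncomputable def Tight (F F' : Multiset (Clause D)) : Prop :=
  F' ≤ F ∧ delta F' = deltaStar F

/-- `F` is matching satisfiable: the clause-variable graph `B(F)` has a matching
covering all clause-nodes.  Such a matching is encoded as a multiset `P` of pairs
(clause-occurrence, variable-node), where the variable-nodes `(v,k)`,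
`k < |D v| - 1`, are the copies of the variable `v`; the matching covers each
clause-occurrence exactly once (`P.map Prod.fst = F`), uses pairwise distinct
variable-nodes, and respects adjacency in `B(F)`. -/
def MatchingSat (F : Multiset (Clause D)) : Prop :=
  ∃ P : Multiset (Clause D × (V × ℕ)),
    P.map Prod.fst = F ∧ (P.map Prod.snd).Nodup ∧
    ∀ p ∈ P, p.2.1 ∈ FinFn.vars p.1 ∧ p.2.2 < (D p.2.1).card - 1

/-- The edge between clause `C` and the copies of variable `v` is retained in
`B_φ(F)`: the literal of `C` with variable `v` is satisfied by `φ`. -/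
def EdgeSat (φ : PAssign D) (C : Clause D) (v : V) : Prop :=
  ∃ ε, (v, ε) ∈ C.1 ∧ SatLit φ (v, ε)

/-- `φ` is matching-satisfying for `F`: `B_φ(F)` has a matching covering all
clause-nodes. -/
def MatchingSatisfying (φ : PAssign D) (F : Multiset (Clause D)) : Prop :=
  ∃ P : Multiset (Clause D × (V × ℕ)),
    P.map Prod.fst = F ∧ (P.map Prod.snd).Nodup ∧
    ∀ p ∈ P, p.2.2 < (D p.2.1).card - 1 ∧ EdgeSat φ p.1 p.2.1

/-- The maximum size of a matching in `B(F)`. -/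
noncomputable def nu (F : Multiset (Clause D)) : ℕ :=
  sSup { k | ∃ P : Multiset (Clause D × (V × ℕ)),
    P.map Prod.fst ≤ F ∧ (P.map Prod.snd).Nodup ∧
    (∀ p ∈ P, p.2.1 ∈ FinFn.vars p.1 ∧ p.2.2 < (D p.2.1).card - 1) ∧
    Multiset.card P = k }

/-- The maximum size of a matching in `B_φ(F)`. -/
noncomputable def nuSub (φ : PAssign D) (F : Multiset (Clause D)) : ℕ :=
  sSup { k | ∃ P : Multiset (Clause D × (V × ℕ)),
    P.map Prod.fst ≤ F ∧ (P.map Prod.snd).Nodup ∧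
    (∀ p ∈ P, p.2.2 < (D p.2.1).card - 1 ∧ EdgeSat φ p.1 p.2.1) ∧
    Multiset.card P = k }

/-- `φ` is matching-maximum for `F`. -/
noncomputable def MatchingMaximum (φ : PAssign D) (F : Multiset (Clause D)) : Prop :=
  nuSub φ F = nu F

/-- `φ` is an autarky for `F`: every clause touched by `φ` is satisfied by `φ`. -/
def IsAutarky (φ : PAssign D) (F : Multiset (Clause D)) : Prop :=
  ∀ C ∈ F, (FinFn.vars C ∩ FinFn.vars φ).Nonempty → SatClause φ C

/-- `F` is lean: it has no non-trivial autarky. -/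
def IsLean (F : Multiset (Clause D)) : Prop :=
  ¬ ∃ φ : PAssign D, IsAutarky φ F ∧ (FinFn.vars φ ∩ mvars F).Nonempty

/-- The sub-multi-clause-set of clauses touched by the variables in `W`. -/
noncomputable def touchedBy (F : Multiset (Clause D)) (W : Finset V) : Multiset (Clause D) :=
  F.filter (fun C => (FinFn.vars C ∩ W).Nonempty)

/-- The restriction `F[W]`: keep the clauses touching `W` and delete from them all
literals whose variable is not in `W`. -/
noncomputable def restrictTo (F : Multiset (Clause D)) (W : Finset V) : Multiset (Clause D) :=
  (touchedBy F W).map (fun C => FinFn.restrictVars C W)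

/-- `φ` is a matching autarky for `F`: `φ` is matching-satisfying for the
sub-multi-clause-set of clauses touched by `φ`. -/
noncomputable def IsMatchingAutarky (φ : PAssign D) (F : Multiset (Clause D)) : Prop :=
  MatchingSatisfying φ (touchedBy F (FinFn.vars φ))

/-- `F` is matching lean: no non-trivial matching autarky. -/
noncomputable def MatchingLean (F : Multiset (Clause D)) : Prop :=
  ¬ ∃ φ : PAssign D, IsMatchingAutarky φ F ∧ (FinFn.vars φ ∩ mvars F).Nonempty

lemma surp_nonempty {F : Multiset (Clause D)} (h : (mvars F).Nonempty) :
    ((mvars F).powerset.erase ∅).Nonempty := by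
  obtain ⟨v, hv⟩ := h
  refine ⟨{v}, ?_⟩
  simp [Finset.mem_erase, Finset.singleton_subset_iff, hv]

/-- The surplus `surp(F) = min {δ(F[W]) : ∅ ≠ W ⊆ var(F)}` (and `0` if `var(F) = ∅`). -/
noncomputable def surp (F : Multiset (Clause D)) : ℤ :=
  if h : (mvars F).Nonempty then
    ((mvars F).powerset.erase ∅).inf' (surp_nonempty h)
      (fun W => delta (restrictTo F W))
  else 0

/-- The number of occurrences of the literal `l` in `F`. -/
noncomputable def litCount (F : Multiset (Clause D)) (l : V × α) : ℕ :=
  Multiset.card (F.filter (fun C => l ∈ C.1))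

/-- The number of occurrences `#_v(F)` of the variable `v` in `F`. -/
noncomputable def varCount (F : Multiset (Clause D)) (v : V) : ℕ :=
  ∑ ε ∈ D v, litCount F (v, ε)

/-- The partial assignment `⟨v → ε⟩`. -/
def single (v : V) (ε : α) (hε : ε ∈ D v) : PAssign D :=
  ⟨{(v, ε)}, by
    refine ⟨?_, ?_⟩
    · intro p hp
      rw [Finset.mem_singleton] at hp
      subst hp; exact hε
    · intro p hp q hq _
      rw [Finset.mem_singleton] at hp hq
      subst hp; subst hq; rfl⟩

/-- Composition `φ ∘ ψ` of partial assignments: domain is the union of the domains,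
`ψ` taking precedence. -/
def comp (φ ψ : PAssign D) : PAssign D :=
  ⟨ψ.1 ∪ φ.1.filter (fun p => p.1 ∉ FinFn.vars ψ), by
    constructor
    · intro p hp
      rcases Finset.mem_union.mp hp with h | h
      · exact ψ.2.1 p h
      · exact φ.2.1 p (Finset.mem_filter.mp h).1
    · intro p hp q hq hpq
      rcases Finset.mem_union.mp hp with h1 | h1 <;>
        rcases Finset.mem_union.mp hq with h2 | h2
      · exact ψ.2.2 p h1 q h2 hpq
      · exact absurd (hpq ▸ Finset.mem_image_of_mem Prod.fst h1)
          (Finset.mem_filter.mp h2).2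
      · exact absurd (hpq.symm ▸ Finset.mem_image_of_mem Prod.fst h2)
          (Finset.mem_filter.mp h1).2
      · exact φ.2.2 p (Finset.mem_filter.mp h1).1 q (Finset.mem_filter.mp h2).1 hpq⟩

/-- Two clauses clash (in some variable). -/
def Clash (C C' : Clause D) : Prop :=
  ∃ v ε ε', (v, ε) ∈ C.1 ∧ (v, ε') ∈ C'.1 ∧ ε ≠ ε'

/-- The number of variables in which two clauses clash. -/
noncomputable def clashCount (C C' : Clause D) : ℕ :=
  ((FinFn.vars C).filter
    (fun v => ∃ ε ε', (v, ε) ∈ C.1 ∧ (v, ε') ∈ C'.1 ∧ ε ≠ ε')).card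

/-- Hitting clause-sets: every two distinct clauses clash. -/
def Hitting (F : Finset (Clause D)) : Prop :=
  ∀ C ∈ F, ∀ C' ∈ F, C ≠ C' → Clash C C'

/-- Boolean clauses over the boolean variables `V × α` (one boolean variable per
generalised literal; the value `false` gives the positive boolean literal). -/
abbrev BClause (V α : Type) :=
  Clause (fun _ : V × α => (Finset.univ : Finset Bool))

/-- The direct translation of a single clause: each literal `(v,ε)` is replaced by
the positive boolean literal of the boolean variable `(v,ε)`. -/
def dirClause (C : Clause D) : BClause V α :=
  ⟨C.1.image (fun p => (p, false)), by
    constructor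
    · intro p _; exact Finset.mem_univ _
    · intro p hp q hq h
      simp only [Finset.mem_image] at hp hq
      obtain ⟨a, -, rfl⟩ := hp
      obtain ⟨b, -, rfl⟩ := hq
      exact congrArg (fun x => (x, false)) h⟩

/-- The ALO-clause for a variable `v`: the negative boolean literals of the boolean
variables `(v,ε)` for `ε ∈ D v`. -/
def aloClause (D : V → Finset α) (v : V) : BClause V α :=
  ⟨(D v).image (fun ε => ((v, ε), true)), by
    constructor
    · intro p _; exact Finset.mem_univ _
    · intro p hp q hq h
      simp only [Finset.mem_image] at hp hq
      obtain ⟨a, -, rfl⟩ := hp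
      obtain ⟨b, -, rfl⟩ := hq
      exact congrArg (fun x => (x, true)) h⟩

/-- The direct translation `Γ(F)`: the translated clauses together with the
ALO-clauses for all occurring variables. -/
noncomputable def dirTrans (F : Finset (Clause D)) : Finset (BClause V α) :=
  F.image dirClause ∪ (mvars F.val).image (aloClause D)

/-!
A sub-multiset `G` of `φ * F` comes from some `F' ≤ F` without clauses satisfied by `φ`, and
`var(G) = var(F') \ var(φ)`. Let `W` be the set of variables of `F` which are in neither `var(F')`
nor `var(φ)`. No clause of `F'` touches `W`, so passing from `F` to `G` loses at least `c(F[W])`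
clauses, and also at least the clauses satisfied by `φ`, while `∑ (|D_x| - 1)` shrinks by the
contributions of `W` and of `var(F) ∩ var(φ)`. If `W ≠ ∅`, the first bound gives
`δ(G) ≤ δ(F) + ∑_{x ∈ var(F) ∩ var(φ)} (|D_x| - 1) - surp(F)`; if `W = ∅`, the second one gives the
same inequality with the number of satisfied clauses in place of `surp(F)`.
-/

omit [DecidableEq α] in
lemma FinFn.mem_vars {s : FinFn D} {x : V} : x ∈ s.vars ↔ ∃ ε, (x, ε) ∈ s.1 := by
  simp [FinFn.vars]

omit [DecidableEq V] [DecidableEq α] in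
lemma FinFn.snd_unique (s : FinFn D) {x : V} {ε ε' : α} (h : (x, ε) ∈ s.1) (h' : (x, ε') ∈ s.1) :
    ε = ε' :=
  congrArg Prod.snd (s.2.2 _ h _ h' rfl)

omit [DecidableEq α] in
lemma FinFn.vars_restrictVars (s : FinFn D) (W : Finset V) :
    (s.restrictVars W).vars = s.vars ∩ W := by
  ext x
  simp only [Finset.mem_inter, FinFn.mem_vars]
  simp [FinFn.restrictVars]

omit [DecidableEq α] in
lemma vars_single {v : V} {ε : α} (hε : ε ∈ D v) : (single v ε hε).vars = {v} := by
  simp [FinFn.vars, single]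

lemma vars_restrict_of_not_satClause {φ : PAssign D} {C : Clause D} (hC : ¬ SatClause φ C) :
    (Clause.restrict φ C).vars = C.vars \ φ.vars := by
  ext x
  simp only [Finset.mem_sdiff, FinFn.mem_vars]
  simp only [Clause.restrict, FinFn.sdiff, Finset.mem_sdiff]
  constructor
  · rintro ⟨ε, hεC, hεφ⟩
    refine ⟨⟨ε, hεC⟩, fun ⟨ε', hε'φ⟩ => hC ⟨(x, ε), hεC, ε', hε'φ, ?_⟩⟩
    rintro rfl
    exact hεφ hε'φ
  · rintro ⟨⟨ε, hεC⟩, hxφ⟩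
    exact ⟨ε, hεC, fun hεφ => hxφ ⟨ε, hεφ⟩⟩

lemma mem_mvars {F : Multiset (Clause D)} {x : V} : x ∈ mvars F ↔ ∃ C ∈ F, x ∈ C.vars := by
  simp [mvars, Finset.mem_sup]

lemma mvars_mono {F' F : Multiset (Clause D)} (h : F' ≤ F) : mvars F' ⊆ mvars F :=
  Finset.sup_mono (Multiset.toFinset_subset.2 (Multiset.subset_of_le h))

lemma mvars_map_restrict {φ : PAssign D} {F : Multiset (Clause D)}
    (hF : ∀ C ∈ F, ¬ SatClause φ C) :
    mvars (F.map (Clause.restrict φ)) = mvars F \ φ.vars := by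
  ext x
  simp only [mem_mvars, Multiset.mem_map, exists_exists_and_eq_and, Finset.mem_sdiff]
  constructor
  · rintro ⟨C, hC, hx⟩
    rw [vars_restrict_of_not_satClause (hF C hC), Finset.mem_sdiff] at hx
    exact ⟨⟨C, hC, hx.1⟩, hx.2⟩
  · rintro ⟨⟨C, hC, hxC⟩, hxφ⟩
    refine ⟨C, hC, ?_⟩
    rw [vars_restrict_of_not_satClause (hF C hC)]
    exact Finset.mem_sdiff.2 ⟨hxC, hxφ⟩

lemma mvars_restrictTo {F : Multiset (Clause D)} {W : Finset V} (hW : W ⊆ mvars F) :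
    mvars (restrictTo F W) = W := by
  ext x
  simp only [mem_mvars, restrictTo, touchedBy, Multiset.mem_map, exists_exists_and_eq_and,
    Multiset.mem_filter, FinFn.vars_restrictVars, Finset.mem_inter]
  constructor
  · rintro ⟨C, -, -, hxW⟩
    exact hxW
  · intro hxW
    obtain ⟨C, hC, hxC⟩ := mem_mvars.1 (hW hxW)
    exact ⟨C, ⟨hC, x, Finset.mem_inter.2 ⟨hxC, hxW⟩⟩, hxC, hxW⟩

lemma delta_restrictTo {F : Multiset (Clause D)} {W : Finset V} (hW : W ⊆ mvars F) :
    delta (restrictTo F W) = (touchedBy F W).card - ∑ x ∈ W, ((D x).card - 1 : ℤ) := by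
  rw [delta, mvars_restrictTo hW, restrictTo, Multiset.card_map]

lemma surp_le_delta_restrictTo {F : Multiset (Clause D)} {W : Finset V} (hW : W ⊆ mvars F)
    (hne : W.Nonempty) : surp F ≤ delta (restrictTo F W) := by
  rw [surp, dif_pos (hne.mono hW)]
  exact Finset.inf'_le (fun W => delta (restrictTo F W))
    (Finset.mem_erase.2 ⟨hne.ne_empty, Finset.mem_powerset.2 hW⟩)

lemma deltaStar_le_iff {F : Multiset (Clause D)} {d : ℤ} :
    deltaStar F ≤ d ↔ ∀ F' ≤ F, delta F' ≤ d := by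
  simp [deltaStar, Finset.sup'_le_iff]

lemma deltaStar_mono {F' F : Multiset (Clause D)} (h : F' ≤ F) : deltaStar F' ≤ deltaStar F :=
  deltaStar_le_iff.2 fun G hG => deltaStar_le_iff.1 le_rfl G (hG.trans h)

lemma applyF_le_applyM (φ : PAssign D) (F : Finset (Clause D)) :
    (applyF φ F).val ≤ applyM φ F.val :=
  Multiset.dedup_le _

lemma exists_eq_map_of_le_map {β γ : Type*} {f : β → γ} {s : Multiset β} {t : Multiset γ}
    (h : t ≤ s.map f) : ∃ s' ≤ s, t = s'.map f := by
  induction s using Quotient.inductionOn with | _ l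
  induction t using Quotient.inductionOn with | _ m
  obtain ⟨m', hperm, hsub⟩ := Multiset.coe_le.1 h
  obtain ⟨l', hl', rfl⟩ := List.sublist_map_iff.1 hsub
  exact ⟨l', Multiset.coe_le.2 hl'.subperm, (Quotient.sound hperm).symm⟩

lemma exists_eq_map_restrict_of_le_applyM {φ : PAssign D} {F G : Multiset (Clause D)}
    (hG : G ≤ applyM φ F) :
    ∃ F' ≤ F, (∀ C ∈ F', ¬ SatClause φ C) ∧ G = F'.map (Clause.restrict φ) := by
  obtain ⟨F', hF', rfl⟩ := exists_eq_map_of_le_map hG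
  obtain ⟨hle, hunsat⟩ := Multiset.le_filter.1 hF'
  exact ⟨F', hle, hunsat, rfl⟩

lemma card_add_card_filter_le_card {β : Type*} {p : β → Prop} [DecidablePred p]
    {s' s : Multiset β} (h : s' ≤ s) (hp : ∀ a ∈ s', ¬ p a) :
    s'.card + (s.filter p).card ≤ s.card := by
  have hle : s'.card ≤ (s.filter fun a => ¬ p a).card :=
    Multiset.card_le_card (Multiset.le_filter.2 ⟨h, hp⟩)
  have hsplit := congrArg Multiset.card (Multiset.filter_add_not p s)
  rw [Multiset.card_add] at hsplit
  omega

lemma card_add_card_touchedBy_le_card {F' F : Multiset (Clause D)} {W : Finset V} (h : F' ≤ F)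
    (hW : Disjoint W (mvars F')) : F'.card + (touchedBy F W).card ≤ F.card := by
  refine card_add_card_filter_le_card h ?_
  rintro C hC ⟨x, hx⟩
  obtain ⟨hxC, hxW⟩ := Finset.mem_inter.1 hx
  exact Finset.disjoint_left.1 hW hxW (mem_mvars.2 ⟨C, hC, hxC⟩)

lemma delta_map_restrict {φ : PAssign D} {F' F : Multiset (Clause D)} (hF' : F' ≤ F)
    (hunsat : ∀ C ∈ F', ¬ SatClause φ C) :
    delta (F'.map (Clause.restrict φ)) =
      delta F + ∑ x ∈ mvars F ∩ φ.vars, ((D x).card - 1 : ℤ) - ((F.card : ℤ) - F'.card) +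
        ∑ x ∈ (mvars F \ φ.vars) \ mvars F', ((D x).card - 1 : ℤ) := by
  have hsub : mvars F' \ φ.vars ⊆ mvars F \ φ.vars :=
    Finset.sdiff_subset_sdiff (mvars_mono hF') subset_rfl
  have hW : (mvars F \ φ.vars) \ (mvars F' \ φ.vars) = (mvars F \ φ.vars) \ mvars F' := by
    grind
  have hsplitF := Finset.sum_inter_add_sum_sdiff (mvars F) φ.vars fun x => ((D x).card - 1 : ℤ)
  have hsplitW := Finset.sum_sdiff hsub (f := fun x => ((D x).card - 1 : ℤ))
  rw [hW] at hsplitW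
  rw [delta, delta, mvars_map_restrict hunsat, Multiset.card_map]
  linarith

lemma delta_map_restrict_le {φ : PAssign D} {F' F : Multiset (Clause D)} (hF' : F' ≤ F)
    (hunsat : ∀ C ∈ F', ¬ SatClause φ C) :
    delta (F'.map (Clause.restrict φ)) ≤
      delta F + ∑ x ∈ mvars F ∩ φ.vars, ((D x).card - 1 : ℤ) -
        min (surp F) (F.filter (SatClause φ)).card := by
  rw [delta_map_restrict hF' hunsat]
  set W := (mvars F \ φ.vars) \ mvars F'
  rcases W.eq_empty_or_nonempty with hW | hW
  · have hcard := card_add_card_filter_le_card hF' hunsat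
    have hmin := min_le_right (surp F) (F.filter (SatClause φ)).card
    rw [hW, Finset.sum_empty]
    omega
  · have hWF : W ⊆ mvars F := Finset.sdiff_subset.trans Finset.sdiff_subset
    have hcard := card_add_card_touchedBy_le_card (W := W) hF' Finset.sdiff_disjoint
    have hsurp := surp_le_delta_restrictTo hWF hW
    have hmin := min_le_left (surp F) (F.filter (SatClause φ)).card
    rw [delta_restrictTo hWF] at hsurp
    omega

theorem deltaStar_applyM_le (φ : PAssign D) (F : Multiset (Clause D)) :
    deltaStar (applyM φ F) ≤
      delta F + ∑ x ∈ mvars F ∩ φ.vars, ((D x).card - 1 : ℤ) -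
        min (surp F) (F.filter (SatClause φ)).card := by
  refine deltaStar_le_iff.2 fun G hG => ?_
  obtain ⟨F', hF', hunsat, rfl⟩ := exists_eq_map_restrict_of_le_applyM hG
  exact delta_map_restrict_le hF' hunsat

lemma card_filter_exists_mem (F : Multiset (Clause D)) (v : V) (S : Finset α) :
    (F.filter fun C => ∃ ε ∈ S, (v, ε) ∈ C.1).card = ∑ ε ∈ S, litCount F (v, ε) := by
  induction S using Finset.induction_on with
  | empty => simp
  | insert ε S hεS ih =>
    have hdisj : (F.filter fun C => (v, ε) ∈ C.1 ∧ ∃ ε' ∈ S, (v, ε') ∈ C.1) = 0 := by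
      refine Multiset.filter_eq_nil.2 ?_
      rintro C - ⟨hε, ε', hε'S, hε'⟩
      exact hεS (C.snd_unique hε hε' ▸ hε'S)
    have hsplit := congrArg Multiset.card (Multiset.filter_add_filter
      (fun C : Clause D => (v, ε) ∈ C.1) (fun C => ∃ ε' ∈ S, (v, ε') ∈ C.1) F)
    rw [hdisj, add_zero, Multiset.card_add, ih] at hsplit
    simp only [Finset.exists_mem_insert, Finset.sum_insert hεS]
    exact hsplit.symm

omit [DecidableEq V] in
lemma satClause_single {v : V} {ε : α} (hε : ε ∈ D v) {C : Clause D} :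
    SatClause (single v ε hε) C ↔ ∃ ε' ∈ (D v).erase ε, (v, ε') ∈ C.1 := by
  simp only [SatClause, SatLit, single, Finset.mem_singleton, Prod.mk.injEq, Finset.mem_erase]
  constructor
  · rintro ⟨⟨_, ε'⟩, hC, _, ⟨rfl, rfl⟩, hne⟩
    exact ⟨ε', ⟨hne.symm, C.2.1 _ hC⟩, hC⟩
  · rintro ⟨ε', ⟨hne, -⟩, hC⟩
    exact ⟨(v, ε'), hC, ε, ⟨rfl, rfl⟩, hne.symm⟩

lemma card_filter_satClause_single (F : Multiset (Clause D)) {v : V} {ε : α} (hε : ε ∈ D v) :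
    (F.filter (SatClause (single v ε hε))).card = varCount F v - litCount F (v, ε) := by
  have hsum := Finset.add_sum_erase (D v) (fun ε' => litCount F (v, ε')) hε
  rw [← card_filter_exists_mem] at hsum
  simp only [satClause_single, varCount]
  omega

theorem deltaStar_decreases_general (F : Multiset (Clause D)) {v : V} (hv : v ∈ mvars F)
    {ε : α} (hε : ε ∈ D v) (hcount : (D v).card ≤ varCount F v - litCount F (v, ε))
    (hsurp : ((D v).card : ℤ) ≤ surp F) :
    deltaStar (applyM (single v ε hε) F) ≤ delta F - 1 := by
  have hbound := deltaStar_applyM_le (single v ε hε) F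
  rw [vars_single, Finset.inter_singleton_of_mem hv, Finset.sum_singleton,
    card_filter_satClause_single] at hbound
  have hmin : ((D v).card : ℤ) ≤ min (surp F) (varCount F v - litCount F (v, ε) : ℕ) :=
    le_min hsurp (mod_cast hcount)
  linarith

/-- if `v ∈ var(F)` with
`min_{ε ∈ D_v}(#_v(F) − #_{(v,ε)}(F)) ≥ |D_v|` and `surp(F) ≥ |D_v|`, then for
every `ε ∈ D_v` one has `δ*(⟨v→ε⟩ * F) ≤ δ(F) − 1`. -/
theorem deltaStar_decreases
    (hD : ∀ v, (D v).Nonempty) (F : Finset (Clause D))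
    (v : V) (hv : v ∈ mvars F.val)
    (h1 : ∀ ε ∈ D v, (D v).card ≤ varCount F.val v - litCount F.val (v, ε))
    (h2 : ((D v).card : ℤ) ≤ surp F.val)
    (ε : α) (hε : ε ∈ D v) :
    deltaStar (applyF (single v ε hε) F).val ≤ delta F.val - 1 :=
  (deltaStar_mono (applyF_le_applyM _ F)).trans
    (deltaStar_decreases_general F.val hv hε (h1 ε hε) h2)

end GCLS
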